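/- arXiv:1201.3315 — 2 statements merged into one kernel-verified Lean document; each statement's English description precedes it below -/
import Mathlib

section
/- Let π = 2 + e₁, so that N(π) = 5, and let n ≥ 1 and 1 ≤ k ≤ n. If C is an additive subgroup of H(ℤ)_{2+e₁}^n of cardinality 25^k (an (n,k) linear code) that corrects all errors of Lipschitz weight 2 or less, then 25^{n−k} ≥ 32n² − 8n + 1. -/
open Quaternion

/-- The set `{δ * π : δ ∈ H(ℤ)}`, as an additive subgroup of the Lipschitz
integers `ℍ[ℤ]`.  Two Lipschitz integers are right congruent modulo `π` iff
their difference lies in this subgroup. -/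
def lipMultiples (π : ℍ[ℤ]) : AddSubgroup ℍ[ℤ] where
  carrier := Set.range (fun δ => δ * π)
  zero_mem' := ⟨0, zero_mul π⟩
  add_mem' := by rintro _ _ ⟨a, rfl⟩ ⟨b, rfl⟩; exact ⟨a + b, add_mul a b π⟩
  neg_mem' := by rintro _ ⟨a, rfl⟩; exact ⟨-a, neg_mul a π⟩

/-- `H(ℤ)_π`: the Lipschitz integers modulo right congruence modulo `π`. -/
abbrev LipMod (π : ℍ[ℤ]) := ℍ[ℤ] ⧸ lipMultiples π

/-- The Lipschitz weight of a class `x ∈ H(ℤ)_π`: the least value of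
`|a₀| + |a₁| + |a₂| + |a₃|` over all representatives `a₀ + a₁e₁ + a₂e₂ + a₃e₃` of `x`. -/
noncomputable def lipWt (π : ℍ[ℤ]) (x : LipMod π) : ℕ :=
  sInf {m | ∃ q : ℍ[ℤ], (QuotientAddGroup.mk q : LipMod π) = x ∧
    m = q.re.natAbs + q.imI.natAbs + q.imJ.natAbs + q.imK.natAbs}

/-- The Lipschitz weight of a vector over `H(ℤ)_π` is the sum of the Lipschitz
weights of its components. -/
noncomputable def lipWtVec (π : ℍ[ℤ]) {n : ℕ} (v : Fin n → LipMod π) : ℕ :=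
  ∑ i, lipWt π (v i)

/-- A code `C ⊆ H(ℤ)_π^n` corrects all errors of Lipschitz weight `t` or less:
any two distinct vectors of Lipschitz weight at most `t` lie in distinct cosets of `C`. -/
def CorrectsLip (π : ℍ[ℤ]) {n : ℕ} (C : AddSubgroup (Fin n → LipMod π)) (t : ℕ) : Prop :=
  ∀ u v : Fin n → LipMod π, lipWtVec π u ≤ t → lipWtVec π v ≤ t → u - v ∈ C → u = v

/-! Reduction modulo `2 + e₁` sends `e₁` to `-2` in `ZMod 5` and `e₃` to `2 e₂`, so it identifies
`H(ℤ)_{2+e₁}` with `𝔽₅ × 𝔽₅`. Each of the four nonzero residues `±1, ±2` of either factor is the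
image of one of the units `±1, ±e₁`, resp. `±e₂, ±e₃`, so the Lipschitz weight of a class is at most
its Hamming weight. Hence the Hamming ball of radius `t` in `𝔽₅^{2n}`, which has
`∑_{j ≤ t} (2n choose j) 4^j` elements, consists of correctable errors, and these lie in pairwise
distinct cosets of the code. -/

open Finset

theorem index_eq_pow_sub_of_card_eq_pow {G : Type*} [AddGroup G] {H : AddSubgroup G} {q n k : ℕ}
    (hq : 0 < q) (hkn : k ≤ n) (hG : Nat.card G = q ^ n) (hH : Nat.card H = q ^ k) :
    H.index = q ^ (n - k) := by
  rw [← Nat.pow_div hkn hq, ← hG, ← hH, ← H.index_mul_card, Nat.mul_div_cancel]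
  rw [hH]
  positivity

theorem sum_range_three_choose_mul_four_pow (n : ℕ) :
    ∑ j ∈ range 3, (2 * n).choose j * 4 ^ j = 32 * n ^ 2 - 8 * n + 1 := by
  have h_choose : (2 * n).choose 2 = n * (2 * n - 1) := by
    rw [Nat.choose_two_right, mul_assoc, Nat.mul_div_cancel_left _ two_pos]
  simp only [sum_range_succ, range_zero, sum_empty, Nat.choose_zero_right, Nat.choose_one_right,
    h_choose]
  obtain _ | m := n
  · rfl
  · rw [show 2 * (m + 1) - 1 = 2 * m + 1 by omega]
    have h_sq : 32 * (m + 1) ^ 2 = 32 * m ^ 2 + 56 * m + 24 + 8 * (m + 1) := by ring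
    rw [h_sq, Nat.add_sub_cancel]
    ring

section Hamming

variable {ι α : Type*} [Fintype ι] [Zero α] [DecidableEq α]

theorem hammingNorm_uncurry {κ : Type*} [Fintype κ] (v : ι → κ → α) :
    hammingNorm (Function.uncurry v) = ∑ i, hammingNorm (v i) := by
  rw [hammingNorm, card_filter, Fintype.sum_prod_type]
  exact sum_congr rfl fun i _ => (card_filter _ _).symm

variable [DecidableEq ι] [Fintype α]

theorem card_filter_support_eq (S : Finset ι) :
    #{v : ι → α | ({i | v i ≠ 0} : Finset ι) = S} = (Fintype.card α - 1) ^ #S := by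
  have h_pi : ({v : ι → α | ({i | v i ≠ 0} : Finset ι) = S} : Finset (ι → α)) =
      Fintype.piFinset fun i => if i ∈ S then univ.erase 0 else {0} := by
    ext v
    simp only [mem_filter_univ, Fintype.mem_piFinset, Finset.ext_iff]
    refine forall_congr' fun i => ?_
    by_cases hi : i ∈ S <;> simp [hi]
  rw [h_pi, Fintype.card_piFinset]
  simp [apply_ite Finset.card]

theorem card_filter_hammingNorm_eq (j : ℕ) :
    #{v : ι → α | hammingNorm v = j} = (Fintype.card ι).choose j * (Fintype.card α - 1) ^ j := by
  have h_maps : ∀ v ∈ ({v : ι → α | hammingNorm v = j} : Finset (ι → α)),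
      ({i | v i ≠ 0} : Finset ι) ∈ powersetCard j univ := fun v hv => by
    simpa [mem_powersetCard, hammingNorm] using hv
  have h_fiber : ∀ S ∈ powersetCard j (univ : Finset ι),
      #{v ∈ ({v : ι → α | hammingNorm v = j} : Finset (ι → α)) |
        ({i | v i ≠ 0} : Finset ι) = S} = (Fintype.card α - 1) ^ j := fun S hS => by
    obtain rfl := (mem_powersetCard.1 hS).2
    rw [← card_filter_support_eq, filter_filter]
    congr 1
    exact filter_congr fun v _ => and_iff_right_of_imp fun hv => congrArg Finset.card hv
  rw [card_eq_sum_card_fiberwise h_maps, sum_const_nat h_fiber, card_powersetCard, card_univ]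

theorem card_filter_hammingNorm_le (t : ℕ) :
    #{v : ι → α | hammingNorm v ≤ t} =
      ∑ j ∈ range (t + 1), (Fintype.card ι).choose j * (Fintype.card α - 1) ^ j := by
  have h_maps : ∀ v ∈ ({v : ι → α | hammingNorm v ≤ t} : Finset (ι → α)),
      hammingNorm v ∈ range (t + 1) := fun v hv => by
    simpa [Nat.lt_succ_iff] using hv
  rw [card_eq_sum_card_fiberwise h_maps]
  refine sum_congr rfl fun j hj => ?_
  rw [← card_filter_hammingNorm_eq, filter_filter]
  congr 1
  exact filter_congr fun v _ =>
    and_iff_right_of_imp fun hv => hv.trans_le (mem_range_succ_iff.1 hj)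

end Hamming

section SpherePacking

theorem lipWt_mk_le (π q : ℍ[ℤ]) :
    lipWt π (QuotientAddGroup.mk q) ≤
      q.re.natAbs + q.imI.natAbs + q.imJ.natAbs + q.imK.natAbs :=
  Nat.sInf_le ⟨q, rfl, rfl⟩

variable {π : ℍ[ℤ]} {n t : ℕ} {C : AddSubgroup (Fin n → LipMod π)}

theorem CorrectsLip.card_le_index [C.FiniteIndex] (hC : CorrectsLip π C t)
    (s : Finset (Fin n → LipMod π)) (hs : ∀ v ∈ s, lipWtVec π v ≤ t) : #s ≤ C.index := by
  rw [← Nat.card_eq_finsetCard, AddSubgroup.index]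
  refine Nat.card_le_card_of_injective
    (fun v : s => (QuotientAddGroup.mk v.1 : (Fin n → LipMod π) ⧸ C)) fun u v huv => ?_
  exact Subtype.ext <| hC _ _ (hs _ u.2) (hs _ v.2) <| QuotientAddGroup.eq_iff_sub_mem.1 huv

theorem CorrectsLip.sum_choose_mul_pow_le_index {κ α : Type*} [Fintype κ] [Fintype α] [Zero α]
    [DecidableEq α] (e : LipMod π ≃ (κ → α)) (he : ∀ x, lipWt π x ≤ hammingNorm (e x))
    (hC : CorrectsLip π C t) :
    ∑ j ∈ range (t + 1), (n * Fintype.card κ).choose j * (Fintype.card α - 1) ^ j ≤ C.index := by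
  classical
  have : Finite (LipMod π) := Finite.of_equiv _ e.symm
  let Φ : (Fin n → LipMod π) ≃ (Fin n × κ → α) :=
    (Equiv.piCongrRight fun _ => e).trans (Equiv.curry _ _ _).symm
  have hΦ (v : Fin n → LipMod π) : lipWtVec π v ≤ hammingNorm (Φ v) :=
    (sum_le_sum fun i _ => he (v i)).trans_eq (hammingNorm_uncurry fun i => e (v i)).symm
  have h_card := card_filter_hammingNorm_le (ι := Fin n × κ) (α := α) t
  rw [Fintype.card_prod, Fintype.card_fin] at h_card
  rw [← h_card, ← card_map Φ.symm.toEmbedding]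
  refine hC.card_le_index _ fun v hv => (hΦ v).trans ?_
  simpa [mem_map_equiv] using hv

end SpherePacking

section Residue

/-- The modulus `2 + e₁`, of norm `5`. -/
abbrev twoAddE₁ : ℍ[ℤ] := ⟨2, 1, 0, 0⟩

theorem mul_twoAddE₁_eq_iff (δ q : ℍ[ℤ]) :
    δ * twoAddE₁ = q ↔ 2 * δ.re - δ.imI = q.re ∧ δ.re + 2 * δ.imI = q.imI ∧
      2 * δ.imJ + δ.imK = q.imJ ∧ 2 * δ.imK - δ.imJ = q.imK := by
  rw [Quaternion.ext_iff, re_mul, imI_mul, imJ_mul, imK_mul]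
  dsimp only [twoAddE₁]
  ring_nf

/-- Reduction of Lipschitz integers modulo `2 + e₁`, with values in `𝔽₅ × 𝔽₅` (encoded as
`Fin 2 → ZMod 5` so that the Hamming norm applies): `e₁` becomes `-2` and `e₃` becomes `2 e₂`. -/
def lipResidue : ℍ[ℤ] →+ (Fin 2 → ZMod 5) where
  toFun q := ![((q.re - 2 * q.imI : ℤ) : ZMod 5), ((q.imJ + 2 * q.imK : ℤ) : ZMod 5)]
  map_zero' := by simp
  map_add' p q := by
    ext i
    fin_cases i <;> simp <;> ring

theorem lipResidue_eq_zero_iff (q : ℍ[ℤ]) :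
    lipResidue q = 0 ↔ 5 ∣ q.re - 2 * q.imI ∧ 5 ∣ q.imJ + 2 * q.imK :=
  (funext_iff.trans Fin.forall_fin_two).trans <|
    and_congr (ZMod.intCast_zmod_eq_zero_iff_dvd _ 5) (ZMod.intCast_zmod_eq_zero_iff_dvd _ 5)

theorem mem_lipMultiples_twoAddE₁_iff (q : ℍ[ℤ]) :
    q ∈ lipMultiples twoAddE₁ ↔ 5 ∣ q.re - 2 * q.imI ∧ 5 ∣ q.imJ + 2 * q.imK := by
  constructor
  · rintro ⟨δ, hδ⟩
    obtain ⟨h_re, h_imI, h_imJ, h_imK⟩ := (mul_twoAddE₁_eq_iff δ q).1 hδ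
    exact ⟨⟨-δ.imI, by linarith⟩, ⟨δ.imK, by linarith⟩⟩
  · rintro ⟨⟨a, ha⟩, b, hb⟩
    refine ⟨⟨2 * a + q.imI, -a, 2 * b - q.imK, b⟩, (mul_twoAddE₁_eq_iff _ q).2 ?_⟩
    refine ⟨?_, ?_, ?_, ?_⟩ <;> dsimp only <;> linarith

theorem ker_lipResidue : lipResidue.ker = lipMultiples twoAddE₁ := by
  ext q
  rw [AddMonoidHom.mem_ker, lipResidue_eq_zero_iff, mem_lipMultiples_twoAddE₁_iff]

theorem exists_intCast_add_two_mul_eq_natAbs_le (x : ZMod 5) :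
    ∃ a b : ℤ, ((a + 2 * b : ℤ) : ZMod 5) = x ∧
      a.natAbs + b.natAbs ≤ if x ≠ 0 then 1 else 0 := by
  fin_cases x
  · exact ⟨0, 0, rfl, le_rfl⟩
  · exact ⟨1, 0, rfl, le_rfl⟩
  · exact ⟨0, 1, rfl, le_rfl⟩
  · exact ⟨0, -1, rfl, le_rfl⟩
  · exact ⟨-1, 0, rfl, le_rfl⟩

theorem exists_lipResidue_eq_natAbs_le_hammingNorm (v : Fin 2 → ZMod 5) :
    ∃ q : ℍ[ℤ], lipResidue q = v ∧
      q.re.natAbs + q.imI.natAbs + q.imJ.natAbs + q.imK.natAbs ≤ hammingNorm v := by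
  obtain ⟨a, b, hab, h_abs⟩ := exists_intCast_add_two_mul_eq_natAbs_le (v 0)
  obtain ⟨c, d, hcd, h_abs'⟩ := exists_intCast_add_two_mul_eq_natAbs_le (v 1)
  refine ⟨⟨a, -b, c, d⟩, ?_, ?_⟩
  · ext i
    fin_cases i
    · simpa [lipResidue] using hab
    · simpa [lipResidue] using hcd
  · rw [hammingNorm, card_filter, Fin.sum_univ_two]
    simp only [Int.natAbs_neg]
    omega

/-- The identification of `H(ℤ)_{2+e₁}` with `𝔽₅ × 𝔽₅` induced by `lipResidue`. -/
noncomputable def lipResidueEquiv : LipMod twoAddE₁ ≃+ (Fin 2 → ZMod 5) :=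
  (QuotientAddGroup.quotientAddEquivOfEq ker_lipResidue.symm).trans <|
    QuotientAddGroup.quotientKerEquivOfSurjective lipResidue fun v =>
      (exists_lipResidue_eq_natAbs_le_hammingNorm v).imp fun _ => And.left

theorem lipWt_le_hammingNorm_lipResidueEquiv (x : LipMod twoAddE₁) :
    lipWt _ x ≤ hammingNorm (lipResidueEquiv x) := by
  obtain ⟨q, hq, h_abs⟩ := exists_lipResidue_eq_natAbs_le_hammingNorm (lipResidueEquiv x)
  have h_rep : (QuotientAddGroup.mk q : LipMod twoAddE₁) = x := lipResidueEquiv.injective hq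
  calc
    lipWt _ x = lipWt _ (QuotientAddGroup.mk q) := by rw [h_rep]
    _ ≤ _ := (lipWt_mk_le _ q).trans h_abs

theorem card_lipMod_twoAddE₁ : Nat.card (LipMod twoAddE₁) = 25 := by
  simp [Nat.card_congr lipResidueEquiv.toEquiv]

theorem card_fin_arrow_lipMod_twoAddE₁ (n : ℕ) : Nat.card (Fin n → LipMod twoAddE₁) = 25 ^ n := by
  rw [Nat.card_fun, card_lipMod_twoAddE₁, Nat.card_fin]

end Residue

theorem sphere_packing_lipschitz_wt_two_2e1_general {n t : ℕ}
    {C : AddSubgroup (Fin n → LipMod twoAddE₁)} (hcorr : CorrectsLip twoAddE₁ C t) :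
    ∑ j ∈ range (t + 1), (2 * n).choose j * 4 ^ j ≤ C.index := by
  simpa [mul_comm n] using hcorr.sum_choose_mul_pow_le_index lipResidueEquiv.toEquiv
    lipWt_le_hammingNorm_lipResidueEquiv

/-- An `(n, k)` linear code over `H(ℤ)_{2+e₁}` (so `N(π) = 5`) correcting all
errors of Lipschitz weight 2 or less satisfies `25^(n-k) ≥ 32n² - 8n + 1`. -/
theorem sphere_packing_lipschitz_wt_two_2e1
    (n k : ℕ) (hn : 1 ≤ n) (hk : 1 ≤ k) (hkn : k ≤ n)
    (C : AddSubgroup (Fin n → LipMod (⟨2, 1, 0, 0⟩ : ℍ[ℤ])))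
    (hcard : Nat.card C = 25 ^ k)
    (hcorr : CorrectsLip (⟨2, 1, 0, 0⟩ : ℍ[ℤ]) C 2) :
    32 * n ^ 2 - 8 * n + 1 ≤ 25 ^ (n - k) := by
  rw [← index_eq_pow_sub_of_card_eq_pow (by norm_num) hkn (card_fin_arrow_lipMod_twoAddE₁ n) hcard,
    ← sum_range_three_choose_mul_four_pow]
  exact sphere_packing_lipschitz_wt_two_2e1_general hcorr
end

section
/- Let n ≥ 1 and 1 ≤ k ≤ n. If C is an additive subgroup of H(ℤ)_{2+e₁+e₂+e₃}^n of cardinality 49^k (an (n,k) linear code over H(ℤ)_π with π = 2 + e₁ + e₂ + e₃, N(π) = 7) that corrects all errors of Lipschitz weight 2 or less, then 49^{n−k} ≥ 32n² + 1. Likewise, if C is an additive subgroup of H(ℤ)_{3+e₁+e₂}^n of cardinality 121^k (an (n,k) linear code over H(ℤ)_π with π = 3 + e₁ + e₂, N(π) = 11) that corrects all errors of Lipschitz weight 2 or less, then 121^{n−k} ≥ 32n² + 1. -/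
open Quaternion

/-!
If no nonzero multiple of `π` has `ℓ¹` norm at most `2 t`, then reduction modulo `π` is injective on
the integer vectors of `ℓ¹` norm at most `t`, and a code correcting all errors of weight `t` puts
their reductions into distinct cosets. So the index of the code is at least the number
`∑ k, 2 ^ k * (4 n).choose k * t.choose k` of integer points in the cross-polytope of dimension
`4 n` and radius `t`, which for `t = 2` is `32 n ^ 2 + 8 n + 1`. The index is a power of
`|H(ℤ)_π| = N(π) ^ 2`, the determinant of right multiplication by `π`. Nonzero Lipschitz integers of
`ℓ¹` norm at most `4` have norm `1, 2, 3, 4, 5, 6, 8, 9, 10` or `16`, a divisor of `720`; hence no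
nonzero multiple of `π` is that short unless `N(π)` divides `720`, and neither `7` nor `11` does.
-/

open Finset

/-- The `ℓ¹` norm of a Lipschitz integer; the Lipschitz weight of a class is the least `lipNorm` of
its representatives. -/
def lipNorm (q : ℍ[ℤ]) : ℕ :=
  q.re.natAbs + q.imI.natAbs + q.imJ.natAbs + q.imK.natAbs

/-- The integer points of the cross-polytope of radius `r` in dimension `m`, which are the words of
length `m` over `ℤ` of Lee weight at most `r`. The intersection with a box only serves to obtain a
`Finset`. -/
noncomputable def l1Ball (m r : ℕ) : Finset (Fin m → ℤ) :=
  {v ∈ Icc (fun _ ↦ -(r : ℤ)) (fun _ ↦ (r : ℤ)) | ∑ i, (v i).natAbs ≤ r}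

theorem mem_l1Ball {m r : ℕ} {v : Fin m → ℤ} : v ∈ l1Ball m r ↔ ∑ i, (v i).natAbs ≤ r := by
  simp only [l1Ball, mem_filter, mem_Icc, Pi.le_def, and_iff_right_iff_imp]
  intro hv
  have natAbs_le (i) : (v i).natAbs ≤ r :=
    (single_le_sum (f := fun i ↦ (v i).natAbs) (fun _ _ ↦ Nat.zero_le _) (mem_univ i)).trans hv
  exact ⟨fun i ↦ by have := natAbs_le i; omega, fun i ↦ by have := natAbs_le i; omega⟩

theorem filter_l1Ball_succ_eq_image_cons {m r : ℕ} {a : ℤ} (ha : a.natAbs ≤ r) :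
    {v ∈ l1Ball (m + 1) r | v 0 = a} =
      (l1Ball m (r - a.natAbs)).image (Fin.cons (α := fun _ ↦ ℤ) a) := by
  ext v
  simp only [mem_filter, mem_image, mem_l1Ball, Fin.sum_univ_succ]
  constructor
  · rintro ⟨hv, rfl⟩
    exact ⟨Fin.tail v, Nat.le_sub_of_add_le' hv, Fin.cons_self_tail v⟩
  · rintro ⟨w, hw, rfl⟩
    simp only [Fin.cons_zero, Fin.cons_succ, and_true]
    omega

theorem sum_Icc_neg_natAbs {M : Type*} [AddCommMonoid M] (f : ℕ → M) (r : ℕ) :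
    ∑ a ∈ Icc (-r : ℤ) r, f a.natAbs = f 0 + 2 • ∑ j ∈ range r, f (j + 1) := by
  induction r with
  | zero => simp
  | succ r ih =>
    rw [Nat.cast_succ, Icc_succ_succ, sum_union (by simp), sum_pair (by lia), ih,
      sum_range_succ, nsmul_add, two_nsmul (f (r + 1)), add_assoc]
    congr 3

theorem card_l1Ball_succ (m r : ℕ) :
    #(l1Ball (m + 1) r) = #(l1Ball m r) + 2 * ∑ s ∈ range r, #(l1Ball m s) := by
  have first_mem : ∀ v ∈ l1Ball (m + 1) r, v 0 ∈ Icc (-r : ℤ) r := fun v hv ↦ by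
    rw [mem_l1Ball, Fin.sum_univ_succ] at hv
    rw [mem_Icc]
    omega
  calc #(l1Ball (m + 1) r)
    _ = ∑ a ∈ Icc (-r : ℤ) r, #{v ∈ l1Ball (m + 1) r | v 0 = a} :=
      card_eq_sum_card_fiberwise first_mem
    _ = ∑ a ∈ Icc (-r : ℤ) r, #(l1Ball m (r - a.natAbs)) := by
      refine sum_congr rfl fun a ha ↦ ?_
      rw [filter_l1Ball_succ_eq_image_cons (by rw [mem_Icc] at ha; omega),
        card_image_of_injective _ (Fin.cons_right_injective (α := fun _ ↦ ℤ) a)]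
    _ = #(l1Ball m r) + 2 * ∑ j ∈ range r, #(l1Ball m (r - 1 - j)) := by
      rw [sum_Icc_neg_natAbs fun j ↦ #(l1Ball m (r - j))]
      simp [Nat.sub_sub, add_comm 1]
    _ = #(l1Ball m r) + 2 * ∑ s ∈ range r, #(l1Ball m s) := by
      rw [sum_range_reflect fun s ↦ #(l1Ball m s)]

theorem choose_succ_right_eq_sum_range (r k : ℕ) :
    r.choose (k + 1) = ∑ s ∈ range r, s.choose k := by
  induction r with
  | zero => simp
  | succ r ih => rw [sum_range_succ, ← ih, Nat.choose_succ_succ, add_comm]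

theorem sum_range_two_pow_mul_choose_succ (m r : ℕ) :
    ∑ k ∈ range (r + 1), 2 ^ k * (m + 1).choose k * r.choose k =
      ∑ k ∈ range (r + 1), 2 ^ k * m.choose k * r.choose k +
        2 * ∑ s ∈ range r, ∑ k ∈ range (s + 1), 2 ^ k * m.choose k * s.choose k := by
  have extend_range {s} (hs : s ∈ range r) :
      ∑ k ∈ range (s + 1), 2 ^ k * m.choose k * s.choose k =
        ∑ k ∈ range r, 2 ^ k * m.choose k * s.choose k := by
    refine sum_subset (range_subset_range.2 (mem_range.1 hs)) fun k _ hk ↦ ?_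
    rw [Nat.choose_eq_zero_of_lt (n := s) (by simpa using hk), mul_zero]
  have hockey_stick : 2 * ∑ s ∈ range r, ∑ k ∈ range (s + 1), 2 ^ k * m.choose k * s.choose k =
      ∑ k ∈ range r, 2 ^ (k + 1) * m.choose k * r.choose (k + 1) := by
    rw [sum_congr rfl fun s hs ↦ extend_range hs, sum_comm, mul_sum]
    refine sum_congr rfl fun k _ ↦ ?_
    rw [← mul_sum, ← choose_succ_right_eq_sum_range]
    ring
  rw [hockey_stick, sum_range_succ', sum_range_succ', add_right_comm, ← sum_add_distrib]
  simp only [Nat.choose_zero_right]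
  congr 1
  refine sum_congr rfl fun k _ ↦ ?_
  rw [Nat.choose_succ_succ]
  ring

theorem card_l1Ball (m r : ℕ) :
    #(l1Ball m r) = ∑ k ∈ range (r + 1), 2 ^ k * m.choose k * r.choose k := by
  induction m generalizing r with
  | zero =>
    have eq_univ : l1Ball 0 r = univ := eq_univ_of_forall fun v ↦ by simp [mem_l1Ball]
    simp [eq_univ, sum_range_succ']
  | succ m ih => simp only [card_l1Ball_succ, ih, sum_range_two_pow_mul_choose_succ]

theorem lipWt_mk_le_lipNorm (π q : ℍ[ℤ]) : lipWt π (QuotientAddGroup.mk q) ≤ lipNorm q :=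
  Nat.sInf_le ⟨q, rfl, rfl⟩

theorem lipNorm_sub_le (p q : ℍ[ℤ]) : lipNorm (p - q) ≤ lipNorm p + lipNorm q :=
  calc lipNorm (p - q)
    _ ≤ (p.re.natAbs + q.re.natAbs) + (p.imI.natAbs + q.imI.natAbs) +
          (p.imJ.natAbs + q.imJ.natAbs) + (p.imK.natAbs + q.imK.natAbs) := by
      unfold lipNorm; gcongr <;> exact Int.natAbs_sub_le _ _
    _ = lipNorm p + lipNorm q := by unfold lipNorm; ring

theorem eq_of_mk_eq_of_lipNorm_le {π p q : ℍ[ℤ]} {t : ℕ}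
    (hπ : ∀ x ∈ lipMultiples π, lipNorm x ≤ 2 * t → x = 0)
    (hp : lipNorm p ≤ t) (hq : lipNorm q ≤ t)
    (hpq : (QuotientAddGroup.mk p : LipMod π) = QuotientAddGroup.mk q) : p = q := by
  have sub_mem : p - q ∈ lipMultiples π := QuotientAddGroup.eq_iff_sub_mem.1 hpq
  exact sub_eq_zero.1 (hπ _ sub_mem ((lipNorm_sub_le p q).trans (by omega)))

theorem det_mulRight_quaternion {R : Type*} [CommRing R] (q : ℍ[R]) :
    LinearMap.det (LinearMap.mulRight R q) = normSq q ^ 2 := by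
  let e : ℍ[R] ≃ₗ[R] (Fin 4 → R) := QuaternionAlgebra.linearEquivTuple (-1) 0 (-1)
  let A : Matrix (Fin 4) (Fin 4) R :=
    !![q.re, -q.imI, -q.imJ, -q.imK;
       q.imI, q.re, q.imK, -q.imJ;
       q.imJ, -q.imK, q.re, q.imI;
       q.imK, q.imJ, -q.imI, q.re]
  have e_apply (x : ℍ[R]) : e x = ![x.re, x.imI, x.imJ, x.imK] := rfl
  have e_mul (x : ℍ[R]) : e (x * q) = A.mulVec (e x) := by
    simp only [e_apply, re_mul, imI_mul, imJ_mul, imK_mul]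
    ext i
    fin_cases i <;> simp [A, Matrix.mulVec, dotProduct, Fin.sum_univ_four] <;> ring
  have conj_eq : e.toLinearMap ∘ₗ LinearMap.mulRight R q ∘ₗ e.symm.toLinearMap = A.toLin' :=
    LinearMap.ext fun v ↦ (e_mul (e.symm v)).trans <| by
      rw [e.apply_symm_apply, Matrix.toLin'_apply]
  have det_eq : A.det = normSq q ^ 2 := by
    simp [A, normSq_def', Matrix.det_succ_row_zero, Fin.sum_univ_succ, Fin.succAbove]
    ring
  rw [← LinearMap.det_conj _ e, conj_eq, LinearMap.det_toLin', det_eq]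

theorem card_lipMod {π : ℍ[ℤ]} (hπ : π ≠ 0) : Nat.card (LipMod π) = (normSq π).natAbs ^ 2 := by
  rw [← Int.natAbs_pow, ← det_mulRight_quaternion]
  exact (Submodule.natAbs_det_equiv (LinearMap.range (LinearMap.mulRight ℤ π))
    (LinearEquiv.ofInjective _ (mul_left_injective₀ hπ))).symm

theorem finite_lipMod {π : ℍ[ℤ]} (hπ : π ≠ 0) : Finite (LipMod π) :=
  Nat.finite_of_card_ne_zero <| by simp [card_lipMod hπ, hπ]

/-- The vectors of `n` Lipschitz integers, flattened to their `4 n` integer coordinates. -/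
def lipVecEquiv (n : ℕ) : (Fin (n * 4) → ℤ) ≃ (Fin n → ℍ[ℤ]) :=
  (finProdFinEquiv.symm.arrowCongr (Equiv.refl ℤ)).trans <|
    (Equiv.curry (Fin n) (Fin 4) ℤ).trans <|
      Equiv.piCongrRight fun _ ↦ (Quaternion.equivTuple ℤ).symm

theorem sum_lipNorm_lipVecEquiv {n : ℕ} (v : Fin (n * 4) → ℤ) :
    ∑ i, lipNorm (lipVecEquiv n v i) = ∑ j, (v j).natAbs := by
  rw [← finProdFinEquiv.sum_comp, Fintype.sum_prod_type]
  refine sum_congr rfl fun i _ ↦ ?_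
  rw [Fin.sum_univ_four]
  rfl

/-- The reduction modulo `π` of the vector of Lipschitz integers with coordinates `v`. -/
def lipReduction (π : ℍ[ℤ]) (n : ℕ) (v : Fin (n * 4) → ℤ) (i : Fin n) : LipMod π :=
  QuotientAddGroup.mk (lipVecEquiv n v i)

theorem lipWtVec_lipReduction_le {π : ℍ[ℤ]} {n t : ℕ} {v : Fin (n * 4) → ℤ}
    (hv : v ∈ l1Ball (n * 4) t) : lipWtVec π (lipReduction π n v) ≤ t :=
  calc lipWtVec π (lipReduction π n v)
    _ ≤ ∑ i, lipNorm (lipVecEquiv n v i) := sum_le_sum fun _ _ ↦ lipWt_mk_le_lipNorm _ _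
    _ = ∑ j, (v j).natAbs := sum_lipNorm_lipVecEquiv v
    _ ≤ t := mem_l1Ball.1 hv

theorem injOn_lipReduction_l1Ball {π : ℍ[ℤ]} {t : ℕ}
    (hπ : ∀ q ∈ lipMultiples π, lipNorm q ≤ 2 * t → q = 0) (n : ℕ) :
    Set.InjOn (lipReduction π n) (l1Ball (n * 4) t) := by
  have lipNorm_le {v} (hv : v ∈ l1Ball (n * 4) t) (i) : lipNorm (lipVecEquiv n v i) ≤ t :=
    calc lipNorm (lipVecEquiv n v i)
      _ ≤ ∑ i, lipNorm (lipVecEquiv n v i) :=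
        single_le_sum (f := fun i ↦ lipNorm (lipVecEquiv n v i)) (fun _ _ ↦ Nat.zero_le _)
          (mem_univ i)
      _ = ∑ j, (v j).natAbs := sum_lipNorm_lipVecEquiv v
      _ ≤ t := mem_l1Ball.1 hv
  intro v hv w hw hvw
  refine (lipVecEquiv n).injective (funext fun i ↦ ?_)
  exact eq_of_mk_eq_of_lipNorm_le hπ (lipNorm_le hv i) (lipNorm_le hw i) (congrFun hvw i)

theorem card_l1Ball_le_index {π : ℍ[ℤ]} (hπ₀ : π ≠ 0) {n t : ℕ}
    (hπ : ∀ q ∈ lipMultiples π, lipNorm q ≤ 2 * t → q = 0)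
    {C : AddSubgroup (Fin n → LipMod π)} (hC : CorrectsLip π C t) :
    #(l1Ball (n * 4) t) ≤ C.index := by
  have := finite_lipMod hπ₀
  let coset (v : l1Ball (n * 4) t) : (Fin n → LipMod π) ⧸ C := lipReduction π n v
  have coset_injective : Function.Injective coset := fun v w hvw ↦
    have sub_mem : lipReduction π n v - lipReduction π n w ∈ C :=
      QuotientAddGroup.eq_iff_sub_mem.1 hvw
    Subtype.ext <| injOn_lipReduction_l1Ball hπ n v.2 w.2 <|
      hC _ _ (lipWtVec_lipReduction_le v.2) (lipWtVec_lipReduction_le w.2) sub_mem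
  simpa [AddSubgroup.index] using Nat.card_le_card_of_injective coset coset_injective

theorem index_eq_of_card_eq_pow {π : ℍ[ℤ]} (hπ : π ≠ 0) {n k : ℕ} (hk : k ≤ n)
    {C : AddSubgroup (Fin n → LipMod π)} (hC : Nat.card C = ((normSq π).natAbs ^ 2) ^ k) :
    C.index = ((normSq π).natAbs ^ 2) ^ (n - k) := by
  have card_pos : 0 < (normSq π).natAbs ^ 2 := by
    have : normSq π ≠ 0 := normSq_ne_zero.2 hπ
    positivity
  refine Nat.eq_of_mul_eq_mul_left (pow_pos card_pos k) ?_
  rw [pow_mul_pow_sub _ hk, ← hC, C.card_mul_index, Nat.card_fun, card_lipMod hπ, Nat.card_fin]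

theorem normSq_dvd_of_mem_lipMultiples {π q : ℍ[ℤ]} (hq : q ∈ lipMultiples π) :
    normSq π ∣ normSq q := by
  obtain ⟨δ, rfl⟩ := hq
  exact ⟨normSq δ, by rw [map_mul, mul_comm]⟩

theorem normSq_dvd_of_lipNorm_le_four {q : ℍ[ℤ]} (hq₀ : q ≠ 0) (hq : lipNorm q ≤ 4) :
    normSq q ∣ 720 := by
  have sq_sum_dvd : ∀ a b c d : Fin 5, a.1 + b.1 + c.1 + d.1 ≤ 4 →
      ¬(a.1 = 0 ∧ b.1 = 0 ∧ c.1 = 0 ∧ d.1 = 0) →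
      a.1 ^ 2 + b.1 ^ 2 + c.1 ^ 2 + d.1 ^ 2 ∣ 720 := by
    decide
  have coord_ne_zero :
      ¬(q.re.natAbs = 0 ∧ q.imI.natAbs = 0 ∧ q.imJ.natAbs = 0 ∧ q.imK.natAbs = 0) := by
    simpa [Quaternion.ext_iff] using hq₀
  unfold lipNorm at hq
  have natAbs_sq_sum_dvd := sq_sum_dvd ⟨q.re.natAbs, by omega⟩ ⟨q.imI.natAbs, by omega⟩
    ⟨q.imJ.natAbs, by omega⟩ ⟨q.imK.natAbs, by omega⟩ hq coord_ne_zero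
  rw [normSq_def']
  simpa [← Int.natCast_dvd_natCast] using natAbs_sq_sum_dvd

theorem eq_zero_of_mem_lipMultiples_of_lipNorm_le_four {π : ℍ[ℤ]} (hπ : ¬ normSq π ∣ 720)
    {q : ℍ[ℤ]} (hq : q ∈ lipMultiples π) (hq4 : lipNorm q ≤ 4) : q = 0 := by
  by_contra hq₀
  exact hπ ((normSq_dvd_of_mem_lipMultiples hq).trans (normSq_dvd_of_lipNorm_le_four hq₀ hq4))

theorem sphere_packing_lipschitz {π : ℍ[ℤ]} (hπ₀ : π ≠ 0) {t : ℕ}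
    (hπ : ∀ q ∈ lipMultiples π, lipNorm q ≤ 2 * t → q = 0) {n k : ℕ} (hk : k ≤ n)
    {C : AddSubgroup (Fin n → LipMod π)} (hcard : Nat.card C = ((normSq π).natAbs ^ 2) ^ k)
    (hC : CorrectsLip π C t) :
    ∑ i ∈ range (t + 1), 2 ^ i * (n * 4).choose i * t.choose i ≤
      ((normSq π).natAbs ^ 2) ^ (n - k) := by
  rw [← card_l1Ball, ← index_eq_of_card_eq_pow hπ₀ hk hcard]
  exact card_l1Ball_le_index hπ₀ hπ hC

theorem sum_range_three_two_pow_mul_choose (n : ℕ) :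
    ∑ i ∈ range 3, 2 ^ i * (n * 4).choose i * Nat.choose 2 i = 32 * n ^ 2 + 8 * n + 1 := by
  have four_mul_choose_two : 4 * (n * 4).choose 2 + 8 * n = 32 * n ^ 2 := by
    qify
    rw [Nat.cast_choose_two]
    push_cast
    ring
  simp only [sum_range_succ, sum_range_zero, Nat.choose_zero_right, Nat.choose_one_right,
    Nat.choose_self]
  linarith

theorem sphere_packing_lipschitz_wt_two_7_and_11_general {π : ℍ[ℤ]} (hπ₀ : π ≠ 0)
    (hπ : ∀ q ∈ lipMultiples π, lipNorm q ≤ 4 → q = 0) {n k : ℕ} (hk : k ≤ n)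
    {C : AddSubgroup (Fin n → LipMod π)} (hcard : Nat.card C = ((normSq π).natAbs ^ 2) ^ k)
    (hC : CorrectsLip π C 2) :
    32 * n ^ 2 + 8 * n + 1 ≤ ((normSq π).natAbs ^ 2) ^ (n - k) :=
  (sum_range_three_two_pow_mul_choose n).symm.trans_le
    (sphere_packing_lipschitz hπ₀ hπ hk hcard hC)

/-- An `(n, k)` linear code over `H(ℤ)_{2+e₁+e₂+e₃}` (`N(π) = 7`), resp. over
`H(ℤ)_{3+e₁+e₂}` (`N(π) = 11`), correcting all errors of Lipschitz weight 2 or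
less satisfies `49^(n-k) ≥ 32n² + 1`, resp. `121^(n-k) ≥ 32n² + 1`. -/
theorem sphere_packing_lipschitz_wt_two_7_and_11 :
    (∀ (n k : ℕ), 1 ≤ n → 1 ≤ k → k ≤ n →
      ∀ C : AddSubgroup (Fin n → LipMod (⟨2, 1, 1, 1⟩ : ℍ[ℤ])),
        Nat.card C = 49 ^ k → CorrectsLip (⟨2, 1, 1, 1⟩ : ℍ[ℤ]) C 2 →
        32 * n ^ 2 + 1 ≤ 49 ^ (n - k)) ∧
    (∀ (n k : ℕ), 1 ≤ n → 1 ≤ k → k ≤ n →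
      ∀ C : AddSubgroup (Fin n → LipMod (⟨3, 1, 1, 0⟩ : ℍ[ℤ])),
        Nat.card C = 121 ^ k → CorrectsLip (⟨3, 1, 1, 0⟩ : ℍ[ℤ]) C 2 →
        32 * n ^ 2 + 1 ≤ 121 ^ (n - k)) := by
  refine ⟨fun n k _ _ hk C hcard hC ↦ ?_, fun n k _ _ hk C hcard hC ↦ ?_⟩
  · have hπ₀ : (⟨2, 1, 1, 1⟩ : ℍ[ℤ]) ≠ 0 := normSq_ne_zero.1 (by decide)
    have hπ : ∀ q ∈ lipMultiples ⟨2, 1, 1, 1⟩, lipNorm q ≤ 4 → q = 0 := fun _ ↦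
      eq_zero_of_mem_lipMultiples_of_lipNorm_le_four (by decide)
    have bound : 32 * n ^ 2 + 8 * n + 1 ≤ 49 ^ (n - k) :=
      sphere_packing_lipschitz_wt_two_7_and_11_general hπ₀ hπ hk hcard hC
    linarith
  · have hπ₀ : (⟨3, 1, 1, 0⟩ : ℍ[ℤ]) ≠ 0 := normSq_ne_zero.1 (by decide)
    have hπ : ∀ q ∈ lipMultiples ⟨3, 1, 1, 0⟩, lipNorm q ≤ 4 → q = 0 := fun _ ↦
      eq_zero_of_mem_lipMultiples_of_lipNorm_le_four (by decide)
    have bound : 32 * n ^ 2 + 8 * n + 1 ≤ 121 ^ (n - k) :=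
      sphere_packing_lipschitz_wt_two_7_and_11_general hπ₀ hπ hk hcard hC
    linarith
end
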